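/- In the setting of the variance comparison lemma — i.i.d. pairs (X_n, Y_n) with Y_n | X_n = x distributed according to the probability vector p*(x) on {1, ..., L}, measurable loss g : S × {1, ..., L} → [0, 1], empirical risk R̂ = (1/N) Σ_n g(X_n, Y_n) and Bayes-distilled risk R̂* = (1/N) Σ_n Σ_y p*_y(X_n) g(X_n, y) — equality Var(R̂*) = Var(R̂) holds if and only if, for almost every x, the loss values g(x, ·) are constant on the support of p*(x); equivalently, if and only if the conditional variance Var(g(X_1, Y_1) | X_1) is almost surely zero. -/

import Mathlib

/-!
The law of total variance for a composition-product `μ ⊗ₘ κ` says that replacing `f (x, y)` by its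
conditional mean `∫ y, f (x, y) ∂κ x` lowers the variance by exactly the mean over `μ` of the
conditional variance `Var[f (x, ·); κ x]`. Averaging `N` independent copies scales both variances
by `1 / N`, so they agree iff the conditional variance, which is nonnegative, vanishes almost
everywhere, that is, iff almost every slice `f (x, ·)` is `κ x`-almost surely constant.
-/

open MeasureTheory ProbabilityTheory

section Variance

variable {Ω ι : Type*} [MeasurableSpace Ω] [Fintype ι] {P : Measure Ω} [IsProbabilityMeasure P]
  {f g : Ω → ℝ}

lemma variance_eq_zero_iff_eventuallyConst (hf : MemLp f 2 P) :
    Var[f; P] = 0 ↔ Filter.EventuallyConst f (ae P) := by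
  rw [Filter.eventuallyConst_iff_exists_eventuallyEq]
  refine ⟨fun h => ⟨P[f], ae_eq_integral_of_variance_eq_zero hf h⟩, ?_⟩
  rintro ⟨c, hc⟩
  rw [variance_congr hc, variance_eq_integral aemeasurable_const]
  simp

lemma variance_const_mul_sum_pi (hf : MemLp f 2 P) (c : ℝ) :
    Var[fun ω : ι → Ω => c * ∑ i, f (ω i); Measure.pi fun _ => P] =
      c ^ 2 * (Fintype.card ι * Var[f; P]) := by
  have hsum : (fun ω : ι → Ω => ∑ i, f (ω i)) = ∑ i, fun ω => f (ω i) := by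
    ext ω
    rw [Finset.sum_apply]
  rw [variance_const_mul, hsum, variance_sum_pi fun _ => hf, Finset.sum_const, nsmul_eq_mul,
    Finset.card_univ]

lemma variance_const_mul_sum_pi_eq_iff [Nonempty ι] (hf : MemLp f 2 P) (hg : MemLp g 2 P) {c : ℝ}
    (hc : c ≠ 0) :
    Var[fun ω : ι → Ω => c * ∑ i, f (ω i); Measure.pi fun _ => P] =
        Var[fun ω : ι → Ω => c * ∑ i, g (ω i); Measure.pi fun _ => P] ↔
      Var[f; P] = Var[g; P] := by
  rw [variance_const_mul_sum_pi hf, variance_const_mul_sum_pi hg,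
    mul_right_inj' (pow_ne_zero 2 hc), mul_right_inj' (Nat.cast_ne_zero.2 Fintype.card_ne_zero)]

end Variance

section CompProd

variable {S Y : Type*} [MeasurableSpace S] [MeasurableSpace Y] {μ : Measure S} {κ : Kernel S Y}
  {f : S × Y → ℝ}

lemma ae_memLp_two_of_compProd [SFinite μ] [IsSFiniteKernel κ] (hf : MemLp f 2 (μ ⊗ₘ κ)) :
    ∀ᵐ x ∂μ, MemLp (fun y => f (x, y)) 2 (κ x) := by
  have hsq := (Measure.integrable_compProd_iff hf.integrable_sq.aestronglyMeasurable).1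
    hf.integrable_sq
  filter_upwards [hf.aestronglyMeasurable.ae_of_compProd (f := fun x y => f (x, y)), hsq.1]
    with x hmeas hint
  exact (memLp_two_iff_integrable_sq hmeas).2 hint

lemma integrable_integral_kernel [SFinite μ] [IsSFiniteKernel κ] {E : Type*} [NormedAddCommGroup E]
    [NormedSpace ℝ E] {f : S × Y → E} (hf : Integrable f (μ ⊗ₘ κ)) :
    Integrable (fun x => ∫ y, f (x, y) ∂κ x) μ :=
  Integrable.integral_compProd (κ := Kernel.const Unit μ) (η := Kernel.prodMkLeft Unit κ) hf

lemma aestronglyMeasurable_integral_kernel [SFinite μ] [IsSFiniteKernel κ] {E : Type*}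
    [NormedAddCommGroup E] [NormedSpace ℝ E] {f : S × Y → E}
    (hf : AEStronglyMeasurable f (μ ⊗ₘ κ)) :
    AEStronglyMeasurable (fun x => ∫ y, f (x, y) ∂κ x) μ :=
  AEStronglyMeasurable.integral_kernel_compProd (κ := Kernel.const Unit μ)
    (η := Kernel.prodMkLeft Unit κ) hf

variable [IsMarkovKernel κ]

lemma variance_ae_eq_integral_sq_sub_sq_integral [SFinite μ] (hf : MemLp f 2 (μ ⊗ₘ κ)) :
    (fun x => Var[fun y => f (x, y); κ x]) =ᵐ[μ]
      fun x => ∫ y, f (x, y) ^ 2 ∂κ x - (∫ y, f (x, y) ∂κ x) ^ 2 := by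
  filter_upwards [ae_memLp_two_of_compProd hf] with x hx
  exact variance_eq_sub hx

lemma memLp_two_integral_kernel [SFinite μ] (hf : MemLp f 2 (μ ⊗ₘ κ)) :
    MemLp (fun x => ∫ y, f (x, y) ∂κ x) 2 μ := by
  have hmeas := aestronglyMeasurable_integral_kernel hf.aestronglyMeasurable
  rw [memLp_two_iff_integrable_sq hmeas]
  refine (integrable_integral_kernel hf.integrable_sq).mono' (hmeas.pow 2) ?_
  filter_upwards [variance_ae_eq_integral_sq_sub_sq_integral hf] with x hx
  rw [Real.norm_of_nonneg (sq_nonneg _), ← sub_nonneg, ← hx]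
  exact variance_nonneg _ _

lemma integrable_variance_kernel [SFinite μ] (hf : MemLp f 2 (μ ⊗ₘ κ)) :
    Integrable (fun x => Var[fun y => f (x, y); κ x]) μ :=
  ((integrable_integral_kernel hf.integrable_sq).sub
    (memLp_two_integral_kernel hf).integrable_sq).congr
    (variance_ae_eq_integral_sq_sub_sq_integral hf).symm

variable [IsProbabilityMeasure μ]

lemma variance_compProd (hf : MemLp f 2 (μ ⊗ₘ κ)) :
    Var[f; μ ⊗ₘ κ] =
      Var[fun x => ∫ y, f (x, y) ∂κ x; μ] + ∫ x, Var[fun y => f (x, y); κ x] ∂μ := by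
  have hmean := memLp_two_integral_kernel hf
  rw [variance_eq_sub hf, variance_eq_sub hmean,
    integral_congr_ae (variance_ae_eq_integral_sq_sub_sq_integral hf),
    integral_sub (integrable_integral_kernel hf.integrable_sq) hmean.integrable_sq,
    Measure.integral_compProd (hf.integrable one_le_two)]
  simp only [Pi.pow_apply, Measure.integral_compProd hf.integrable_sq]
  ring

lemma variance_integral_kernel_eq_iff (hf : MemLp f 2 (μ ⊗ₘ κ)) :
    Var[fun x => ∫ y, f (x, y) ∂κ x; μ] = Var[f; μ ⊗ₘ κ] ↔
      ∀ᵐ x ∂μ, Var[fun y => f (x, y); κ x] = 0 := by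
  rw [variance_compProd hf, left_eq_add]
  exact integral_eq_zero_iff_of_nonneg (fun _ => variance_nonneg _ _)
    (integrable_variance_kernel hf)

theorem variance_bayes_distilled_eq_iff_general {N : ℕ} (hN : 0 < N) (hf : MemLp f 2 (μ ⊗ₘ κ)) :
    ((Var[fun ω => (N : ℝ)⁻¹ * ∑ n, ∫ y, f ((ω n).1, y) ∂κ (ω n).1;
          Measure.pi fun _ : Fin N => μ ⊗ₘ κ] =
        Var[fun ω => (N : ℝ)⁻¹ * ∑ n, f (ω n); Measure.pi fun _ : Fin N => μ ⊗ₘ κ]) ↔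
      ∀ᵐ x ∂μ, Filter.EventuallyConst (fun y => f (x, y)) (ae (κ x))) ∧
    ((Var[fun ω => (N : ℝ)⁻¹ * ∑ n, ∫ y, f ((ω n).1, y) ∂κ (ω n).1;
          Measure.pi fun _ : Fin N => μ ⊗ₘ κ] =
        Var[fun ω => (N : ℝ)⁻¹ * ∑ n, f (ω n); Measure.pi fun _ : Fin N => μ ⊗ₘ κ]) ↔
      ∀ᵐ x ∂μ, Var[fun y => f (x, y); κ x] = 0) := by
  have : Nonempty (Fin N) := Fin.pos_iff_nonempty.1 hN
  have hfst : MeasurePreserving Prod.fst (μ ⊗ₘ κ) μ := ⟨measurable_fst, Measure.fst_compProd μ κ⟩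
  have hmean := memLp_two_integral_kernel hf
  have hsingle : Var[fun z : S × Y => ∫ y, f (z.1, y) ∂κ z.1; μ ⊗ₘ κ] = Var[f; μ ⊗ₘ κ] ↔
      ∀ᵐ x ∂μ, Var[fun y => f (x, y); κ x] = 0 := by
    rw [hfst.variance_fun_comp hmean.aemeasurable, variance_integral_kernel_eq_iff hf]
  have haverage := (variance_const_mul_sum_pi_eq_iff (ι := Fin N)
    (hmean.comp_measurePreserving hfst) hf (inv_ne_zero (Nat.cast_ne_zero.2 hN.ne'))).trans hsingle
  refine ⟨haverage.trans (Filter.eventually_congr ?_), haverage⟩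
  filter_upwards [ae_memLp_two_of_compProd hf] with x hx
  exact variance_eq_zero_iff_eventuallyConst hx

end CompProd

section DensityKernel

variable {S Y : Type*} [MeasurableSpace S] [MeasurableSpace Y]

/-- The kernel sending `x` to the measure with density `p x` with respect to `ρ`: the conditional
law of a label given the instance `x`. Negative values of `p` are replaced by `0`, and the kernel is
`0` if the resulting density is not jointly measurable. -/
noncomputable def densityKernel (ρ : Measure Y) [SFinite ρ] (p : S → Y → ℝ) : Kernel S Y :=
  Kernel.withDensity (Kernel.const S ρ) fun x y => ENNReal.ofReal (p x y)

variable {ρ : Measure Y} [SFinite ρ] {p : S → Y → ℝ}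

lemma compProd_densityKernel {μ : Measure S} [SFinite μ] (hp : Measurable (Function.uncurry p)) :
    μ ⊗ₘ densityKernel ρ p = (μ.prod ρ).withDensity fun z => ENNReal.ofReal (p z.1 z.2) := by
  have : IsSFiniteKernel
      (Kernel.withDensity (Kernel.const S ρ) fun x y => ENNReal.ofReal (p x y)) :=
    Kernel.IsSFiniteKernel.withDensity _ fun _ _ => ENNReal.ofReal_ne_top
  rw [densityKernel, Measure.compProd_withDensity hp.ennreal_ofReal, Measure.compProd_const]

lemma densityKernel_apply (hp : Measurable (Function.uncurry p)) (x : S) :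
    densityKernel ρ p x = ρ.withDensity fun y => ENNReal.ofReal (p x y) :=
  Kernel.withDensity_apply _ hp.ennreal_ofReal x

lemma isMarkovKernel_densityKernel (hp : Measurable (Function.uncurry p))
    (hp_lintegral : ∀ x, ∫⁻ y, ENNReal.ofReal (p x y) ∂ρ = 1) :
    IsMarkovKernel (densityKernel ρ p) := by
  refine ⟨fun x => ⟨?_⟩⟩
  rw [densityKernel_apply hp, withDensity_apply _ .univ, Measure.restrict_univ, hp_lintegral]

lemma integral_densityKernel (hp : Measurable (Function.uncurry p)) {x : S}
    (hp_nonneg : ∀ y, 0 ≤ p x y) (f : Y → ℝ) :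
    ∫ y, f y ∂densityKernel ρ p x = ∫ y, p x y * f y ∂ρ := by
  rw [densityKernel_apply hp, integral_withDensity_eq_integral_toReal_smul
    hp.of_uncurry_left.ennreal_ofReal (.of_forall fun _ => ENNReal.ofReal_lt_top)]
  simp only [ENNReal.toReal_ofReal (hp_nonneg _), smul_eq_mul]

lemma ae_densityKernel_iff (hp : Measurable (Function.uncurry p)) (x : S) {q : Y → Prop} :
    (∀ᵐ y ∂densityKernel ρ p x, q y) ↔ ∀ᵐ y ∂ρ, 0 < p x y → q y := by
  rw [densityKernel_apply hp, ae_withDensity_iff hp.of_uncurry_left.ennreal_ofReal]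
  simp only [ne_eq, ENNReal.ofReal_eq_zero, not_le]

section Count

lemma ae_densityKernel_count [Countable Y] (hp : Measurable (Function.uncurry p)) (x : S) :
    ae (densityKernel .count p x) = Filter.principal {y | 0 < p x y} := by
  ext s
  exact (ae_densityKernel_iff hp x).trans Measure.ae_count_iff

lemma eventuallyConst_densityKernel_count_iff [Countable Y] (hp : Measurable (Function.uncurry p))
    (x : S) {β : Type*} (f : Y → β) :
    Filter.EventuallyConst f (ae (densityKernel .count p x)) ↔
      ∀ y y', 0 < p x y → 0 < p x y' → f y = f y' := by
  rw [ae_densityKernel_count hp, (Filter.hasBasis_principal _).eventuallyConst_iff]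
  simp only [Set.mem_ofPred_eq, true_and, exists_const]
  exact forall_congr' fun _ => forall_comm

variable [MeasurableSingletonClass Y] [Fintype Y]

lemma isMarkovKernel_densityKernel_count (hp : Measurable (Function.uncurry p))
    (hp_nonneg : ∀ x y, 0 ≤ p x y) (hp_sum : ∀ x, ∑ y, p x y = 1) :
    IsMarkovKernel (densityKernel .count p) := by
  refine isMarkovKernel_densityKernel hp fun x => ?_
  rw [lintegral_count, tsum_fintype, ← ENNReal.ofReal_sum_of_nonneg fun y _ => hp_nonneg x y,
    hp_sum, ENNReal.ofReal_one]

lemma integral_densityKernel_count (hp : Measurable (Function.uncurry p))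
    {x : S} (hp_nonneg : ∀ y, 0 ≤ p x y) (f : Y → ℝ) :
    ∫ y, f y ∂densityKernel .count p x = ∑ y, p x y * f y := by
  rw [integral_densityKernel hp hp_nonneg, integral_count]

lemma variance_densityKernel_count (hp : Measurable (Function.uncurry p))
    {x : S} (hp_nonneg : ∀ y, 0 ≤ p x y) [IsProbabilityMeasure (densityKernel .count p x)]
    (f : Y → ℝ) :
    Var[f; densityKernel .count p x] = ∑ y, p x y * f y ^ 2 - (∑ y, p x y * f y) ^ 2 := by
  rw [variance_eq_sub .of_discrete]
  simp only [integral_densityKernel_count hp hp_nonneg, Pi.pow_apply]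

end Count

end DensityKernel

/-- Equality condition in Lemma 1 of the paper (from Menon et al. 2021): in the setting of
the variance comparison lemma — i.i.d. pairs `(X_n, Y_n)` with `X_n ∼ μ` and `Y_n | X_n = x`
distributed as the probability vector `p*(x)` on `Fin L` (joint law `ν` = `μ ⊗ count` with
density `(x, y) ↦ p*_y(x)`, sample law `ν^⊗N`), loss `g : S × Fin L → [0,1]` measurable,
`R̂ = (1/N) Σ_n g(X_n, Y_n)` and `R̂* = (1/N) Σ_n Σ_y p*_y(X_n) g(X_n, y)` — the variances
are equal iff for `μ`-a.e. `x` the loss values `g(x, ·)` are constant on the support of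
`p*(x)`; equivalently, iff the conditional variance
`Var(g(X₁,Y₁) | X₁ = x) = Σ_y p*_y(x) g(x,y)² − (Σ_y p*_y(x) g(x,y))²` is a.s. zero. -/
theorem variance_bayes_distilled_eq_iff
    {S : Type*} [MeasurableSpace S] {L N : ℕ} (hN : 0 < N)
    (μ : Measure S) [IsProbabilityMeasure μ]
    (p : S → Fin L → ℝ)
    (hp_meas : ∀ y, Measurable fun x => p x y)
    (hp_nonneg : ∀ x y, 0 ≤ p x y)
    (hp_sum : ∀ x, ∑ y, p x y = 1)
    (g : S × Fin L → ℝ)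
    (hg_meas : Measurable g)
    (hg_bdd : ∀ z, g z ∈ Set.Icc (0 : ℝ) 1)
    (ν : Measure (S × Fin L))
    (hν : ν = (μ.prod (Measure.count : Measure (Fin L))).withDensity
      fun z => ENNReal.ofReal (p z.1 z.2))
    (Pr : Measure (Fin N → S × Fin L))
    (hPr : Pr = Measure.pi fun _ => ν) :
    ((variance (fun ω => (N : ℝ)⁻¹ * ∑ n, ∑ y, p (ω n).1 y * g ((ω n).1, y)) Pr =
        variance (fun ω => (N : ℝ)⁻¹ * ∑ n, g (ω n)) Pr) ↔
      ∀ᵐ x ∂μ, ∀ y y' : Fin L, 0 < p x y → 0 < p x y' → g (x, y) = g (x, y')) ∧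
    ((variance (fun ω => (N : ℝ)⁻¹ * ∑ n, ∑ y, p (ω n).1 y * g ((ω n).1, y)) Pr =
        variance (fun ω => (N : ℝ)⁻¹ * ∑ n, g (ω n)) Pr) ↔
      ∀ᵐ x ∂μ, (∑ y, p x y * g (x, y) ^ 2) - (∑ y, p x y * g (x, y)) ^ 2 = 0) := by
  have hp : Measurable (Function.uncurry p) := measurable_from_prod_countable_left hp_meas
  have := isMarkovKernel_densityKernel_count hp hp_nonneg hp_sum
  have hg : MemLp g 2 (μ ⊗ₘ densityKernel .count p) :=
    memLp_of_bounded (.of_forall hg_bdd) hg_meas.aestronglyMeasurable 2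
  rw [hPr, hν, ← compProd_densityKernel hp]
  simpa only [integral_densityKernel_count hp (hp_nonneg _),
    variance_densityKernel_count hp (hp_nonneg _),
    eventuallyConst_densityKernel_count_iff hp] using variance_bayes_distilled_eq_iff_general hN hg
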